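/- Let S denote the sum over all 64 triples (ε,j,δ) with ε ∈ {-1,1}^3, j ∈ {1,2,3,4}, δ ∈ {-1,1} of (2·e_1^6 − 12·e_1^4·e_2 + 11·e_1^2·e_2^2 + 5·e_1^3·e_3 + 11·e_1·e_2·e_3 + 9·e_3^2 − 5·e_1^2·e_4 − 9·e_2·e_4 − 2·e_1·e_5 + 2·e_6)·e_1^2 / π, where all e_k and π are evaluated at D(ε,j,δ). Then S = 82176·(a_1+a_2+a_3 − b_1−b_2−b_3 − 2c). (This identity computes 60480·F_{Td^6} of the Nill–Paffenholz toric Fano 7-fold by the localization formula.) -/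

import Mathlib

/-!
The sum is evaluated as an iterated push-forward along the tower of projective bundles underlying
the 7-fold, one divided difference per fibre.

* Summing over `δ` (`pair_sum`) extracts the odd part in the last eigenvalue `L`, which cancels
  the pole at `L = 0` and leaves the polynomial `fibreOne` in `L` and the elementary symmetric
  functions of the six other eigenvalues.
* Summing over `ε` (`eps_sum`) cancels the poles at `aᵢ = 0`. The result is the weighted
  homogeneous polynomial `fibreTwo` of degree 4 in the `aᵢ`, in `u = c + 2 bⱼ`, and in the
  elementary symmetric functions `sₖ` of the differences `bₖ - bⱼ`.
* For `j` fixed, `u` and the `sₖ` are polynomials in `t = bⱼ` whose coefficients do not depend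
  on `j`, so `fibreTwo` becomes a quartic in `t` (`fibreTwo_quartic`). By Lagrange interpolation
  (`lagrange_quartic`) the sum over `j` of its values divided by `∏ (bₖ - bⱼ)` sees only the
  coefficients of `t ^ 3` and `t ^ 4`, which give the stated linear form.
-/

open Finset

noncomputable section

/-- Sign of a Boolean: `true ↦ 1`, `false ↦ -1`, encoding `{-1,1}`. -/
def sgn (b : Bool) : ℝ := if b then 1 else -1

/-- The eigenvalue 7-tuple `D(ε,j,δ)` (as a multiset) of the generic torus-induced
holomorphic vector field at the fixed point indexed by `(ε,j,δ)` on the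
Nill–Paffenholz toric Fano 7-fold.  Here `a : Fin 3 → ℝ`, `b : Fin 4 → ℝ` (with `b 3 = 0`). -/
def tup (a : Fin 3 → ℝ) (b : Fin 4 → ℝ) (c : ℝ) (ε : Fin 3 → Bool) (j : Fin 4) (δ : Bool) :
    Multiset ℝ :=
  ({sgn (ε 0) * a 0, sgn (ε 1) * a 1, sgn (ε 2) * a 2} : Multiset ℝ)
    + (Finset.univ.erase j).val.map (fun k => b k - b j)
    + {sgn δ * (c - (∑ i ∈ Finset.univ.filter (fun i => ε i = false), a i) + 2 * b j)}

/-- The `k`-th elementary symmetric polynomial of the entries of a multiset. -/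
def esym (k : ℕ) (D : Multiset ℝ) : ℝ := ((D.powersetCard k).map Multiset.prod).sum

/-- The numerator of a summand, as a polynomial in the elementary symmetric functions. -/
def numer (e1 e2 e3 e4 e5 e6 : ℝ) : ℝ :=
  (2 * e1 ^ 6 - 12 * e1 ^ 4 * e2 + 11 * e1 ^ 2 * e2 ^ 2 + 5 * e1 ^ 3 * e3 + 11 * e1 * e2 * e3
    + 9 * e3 ^ 2 - 5 * e1 ^ 2 * e4 - 9 * e2 * e4 - 2 * e1 * e5 + 2 * e6) * e1 ^ 2

/-- The contribution of a fixed point with eigenvalue multiset `D`. -/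
def contrib (D : Multiset ℝ) : ℝ :=
  numer (esym 1 D) (esym 2 D) (esym 3 D) (esym 4 D) (esym 5 D) (esym 6 D) / D.prod

/-- The polynomial `(numer(L) - numer(-L)) / L`, where `numer(L)` is evaluated at six eigenvalues
with elementary symmetric functions `f1, …, f6` together with `L`. -/
def fibreOne (f1 f2 f3 f4 f5 f6 L : ℝ) : ℝ :=
  8 * f1 ^ 7 - 90 * f1 ^ 5 * f2 - 48 * f1 ^ 5 * L ^ 2 + 62 * f1 ^ 4 * f3 + 110 * f1 ^ 3 * f2 ^ 2
    - 50 * f1 ^ 3 * f2 * L ^ 2 - 62 * f1 ^ 3 * f4 - 48 * f1 ^ 3 * L ^ 4 + 84 * f1 ^ 2 * f2 * f3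
    + 70 * f1 ^ 2 * f3 * L ^ 2 - 8 * f1 ^ 2 * f5 + 190 * f1 * f2 ^ 2 * L ^ 2 - 36 * f1 * f2 * f4
    - 28 * f1 * f2 * L ^ 4 + 36 * f1 * f3 ^ 2 - 70 * f1 * f4 * L ^ 2 + 8 * f1 * f6
    + 8 * f1 * L ^ 6 + 40 * f2 * f3 * L ^ 2

/-- The value of the sum over `ε` and `δ`, up to the factor `1 / ∏ (bₖ - bⱼ)`. Here `g1, g2, g3`
are the elementary symmetric functions of the `aᵢ`, `u = c + 2 bⱼ`, and `s1, s2, s3` are the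
elementary symmetric functions of the differences `bₖ - bⱼ`. -/
def fibreTwo (g1 g2 g3 u s1 s2 s3 : ℝ) : ℝ :=
  - 13312 * g1 ^ 4 + 20320 * g1 ^ 3 * u + 21784 * g1 ^ 3 * s1 + 43088 * g1 ^ 2 * g2
    - 21856 * g1 ^ 2 * u ^ 2 - 52016 * g1 ^ 2 * u * s1 - 30776 * g1 ^ 2 * s1 ^ 2
    + 17096 * g1 ^ 2 * s2 - 39104 * g1 * g2 * u - 39344 * g1 * g2 * s1 + 9488 * g1 * g3
    + 3072 * g1 * u ^ 3 + 25344 * g1 * u ^ 2 * s1 + 23664 * g1 * u * s1 ^ 2 - 7664 * g1 * u * s2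
    + 10896 * g1 * s1 ^ 3 - 13704 * g1 * s1 * s2 - 480 * g1 * s3 - 38056 * g2 ^ 2
    + 39104 * g2 * u ^ 2 + 78688 * g2 * u * s1 + 49720 * g2 * s1 ^ 2 - 30360 * g2 * s2
    - 1536 * u ^ 4 - 16896 * u ^ 3 * s1 - 23664 * u ^ 2 * s1 ^ 2 + 7664 * u ^ 2 * s2
    - 21792 * u * s1 ^ 3 + 27408 * u * s1 * s2 + 960 * u * s3 - 14952 * s1 ^ 4
    + 36608 * s1 ^ 2 * s2 + 11752 * s1 * s3 + 12936 * s2 ^ 2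

lemma esym_zero (D : Multiset ℝ) : esym 0 D = 1 := by
  simp [esym]

lemma esym_succ_empty (k : ℕ) : esym (k + 1) (0 : Multiset ℝ) = 0 := by
  simp [esym, Multiset.powersetCard_zero_right]

lemma esym_succ_cons (k : ℕ) (x : ℝ) (D : Multiset ℝ) :
    esym (k + 1) (x ::ₘ D) = esym (k + 1) D + x * esym k D := by
  simp [esym, Multiset.powersetCard_cons, Multiset.sum_map_mul_left]

/-- The sum over `δ`: the pole at `L = 0` cancels. -/
lemma pair_sum (D : Multiset ℝ) (L : ℝ) (hL : L ≠ 0) :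
    contrib (L ::ₘ D) + contrib (-L ::ₘ D) =
      fibreOne (esym 1 D) (esym 2 D) (esym 3 D) (esym 4 D) (esym 5 D) (esym 6 D) L / D.prod := by
  have key : ∀ f1 f2 f3 f4 f5 f6 : ℝ,
      numer (f1 + L * 1) (f2 + L * f1) (f3 + L * f2) (f4 + L * f3) (f5 + L * f4) (f6 + L * f5)
        - numer (f1 + -L * 1) (f2 + -L * f1) (f3 + -L * f2) (f4 + -L * f3) (f5 + -L * f4)
          (f6 + -L * f5) = L * fibreOne f1 f2 f3 f4 f5 f6 L := by
    intro f1 f2 f3 f4 f5 f6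
    simp only [numer, fibreOne]
    ring
  simp only [contrib, Multiset.prod_cons, esym_succ_cons 0, esym_succ_cons 1, esym_succ_cons 2,
    esym_succ_cons 3, esym_succ_cons 4, esym_succ_cons 5, esym_zero]
  rw [neg_mul L D.prod, div_neg, ← sub_eq_add_neg, ← sub_div, zero_add, key, mul_div_mul_left _ _ hL]

/-- `fibreOne` at the six eigenvalues `x, y, z` and those with elementary symmetric functions
`s1, s2, s3`. -/
def fibreOneAt (s1 s2 s3 x y z L : ℝ) : ℝ :=
  fibreOne (s1 + (x + y + z)) (s2 + (x + y + z) * s1 + (x * y + y * z + z * x))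
    (s3 + (x + y + z) * s2 + (x * y + y * z + z * x) * s1 + x * y * z)
    ((x + y + z) * s3 + (x * y + y * z + z * x) * s2 + x * y * z * s1)
    ((x * y + y * z + z * x) * s3 + x * y * z * s2) (x * y * z * s3) L

/-- The sum over `ε`, with denominators cleared: the poles at `x, y, z = 0` cancel. -/
lemma eps_sum (s1 s2 s3 x y z u : ℝ) :
    fibreOneAt s1 s2 s3 x y z u - fibreOneAt s1 s2 s3 (-x) y z (u - x)
      - fibreOneAt s1 s2 s3 x (-y) z (u - y) - fibreOneAt s1 s2 s3 x y (-z) (u - z)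
      + fibreOneAt s1 s2 s3 (-x) (-y) z (u - (x + y))
      + fibreOneAt s1 s2 s3 (-x) y (-z) (u - (x + z))
      + fibreOneAt s1 s2 s3 x (-y) (-z) (u - (y + z))
      - fibreOneAt s1 s2 s3 (-x) (-y) (-z) (u - (x + y + z)) =
    x * y * z * fibreTwo (x + y + z) (x * y + y * z + z * x) (x * y * z) u s1 s2 s3 := by
  simp only [fibreOneAt, fibreOne, fibreTwo]
  ring

lemma pair_sum_three (X : Multiset ℝ) (h4 : esym 4 X = 0) (h5 : esym 5 X = 0) (h6 : esym 6 X = 0)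
    (x y z L : ℝ) (hL : L ≠ 0) :
    contrib (L ::ₘ x ::ₘ y ::ₘ z ::ₘ X) + contrib (-L ::ₘ x ::ₘ y ::ₘ z ::ₘ X) =
      fibreOneAt (esym 1 X) (esym 2 X) (esym 3 X) x y z L / (x * y * z * X.prod) := by
  rw [pair_sum _ _ hL]
  simp only [Multiset.prod_cons, esym_succ_cons 0, esym_succ_cons 1, esym_succ_cons 2,
    esym_succ_cons 3, esym_succ_cons 4, esym_succ_cons 5, esym_zero, zero_add, Nat.reduceAdd,
    h4, h5, h6, fibreOneAt]
  congr 1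
  · congr 1 <;> ring
  · ring

lemma sum_bool_three (f : (Fin 3 → Bool) → ℝ) :
    ∑ ε, f ε = f ![true, true, true] + f ![false, true, true] + f ![true, false, true]
      + f ![true, true, false] + f ![false, false, true] + f ![false, true, false]
      + f ![true, false, false] + f ![false, false, false] := by
  have h : (Finset.univ : Finset (Fin 3 → Bool)) =
      {![true, true, true], ![false, true, true], ![true, false, true], ![true, true, false],
        ![false, false, true], ![false, true, false], ![true, false, false],
        ![false, false, false]} := by decide
  rw [h]
  repeat rw [Finset.sum_insert (by decide)]
  rw [Finset.sum_singleton]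
  ring

/-- The differences `bₖ - bⱼ` for `k ≠ j`. -/
def bDiffs (b : Fin 4 → ℝ) (j : Fin 4) : Multiset ℝ :=
  (Finset.univ.erase j).val.map (fun k => b k - b j)

lemma tup_eq (a : Fin 3 → ℝ) (b : Fin 4 → ℝ) (c : ℝ) (ε : Fin 3 → Bool) (j : Fin 4) (δ : Bool) :
    tup a b c ε j δ =
      (sgn δ * (c - (∑ i ∈ Finset.univ.filter (fun i => ε i = false), a i) + 2 * b j)) ::ₘ
        (sgn (ε 0) * a 0) ::ₘ (sgn (ε 1) * a 1) ::ₘ (sgn (ε 2) * a 2) ::ₘ bDiffs b j := by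
  rw [tup, add_comm, Multiset.singleton_add]
  simp [bDiffs]

/-- The sum over `ε` and `δ` of the contributions of the fixed points with a given `j`. -/
lemma eps_delta_sum (a : Fin 3 → ℝ) (b : Fin 4 → ℝ) (c : ℝ) (j : Fin 4)
    (hgen : ∀ (ε : Fin 3 → Bool) (j : Fin 4) (δ : Bool), ∀ x ∈ tup a b c ε j δ, x ≠ 0)
    (h4 : esym 4 (bDiffs b j) = 0) (h5 : esym 5 (bDiffs b j) = 0) (h6 : esym 6 (bDiffs b j) = 0) :
    ∑ ε : Fin 3 → Bool, ∑ δ : Bool, contrib (tup a b c ε j δ) =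
      fibreTwo (a 0 + a 1 + a 2) (a 0 * a 1 + a 1 * a 2 + a 2 * a 0) (a 0 * a 1 * a 2)
        (c + 2 * b j) (esym 1 (bDiffs b j)) (esym 2 (bDiffs b j)) (esym 3 (bDiffs b j))
        / (bDiffs b j).prod := by
  have ha : a 0 * a 1 * a 2 ≠ 0 := by
    have h := hgen (fun _ => true) j true
    simp only [tup_eq, Multiset.mem_cons, sgn, if_true, one_mul] at h
    exact mul_ne_zero (mul_ne_zero (h _ (by simp)) (h _ (by simp))) (h _ (by simp))
  have hpair : ∀ ε : Fin 3 → Bool, ∑ δ : Bool, contrib (tup a b c ε j δ) =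
      fibreOneAt (esym 1 (bDiffs b j)) (esym 2 (bDiffs b j)) (esym 3 (bDiffs b j))
        (sgn (ε 0) * a 0) (sgn (ε 1) * a 1) (sgn (ε 2) * a 2)
        (c + 2 * b j - ∑ i ∈ Finset.univ.filter (fun i => ε i = false), a i)
        / (sgn (ε 0) * a 0 * (sgn (ε 1) * a 1) * (sgn (ε 2) * a 2) * (bDiffs b j).prod) := by
    intro ε
    have hL := hgen ε j true (sgn true *
      (c - (∑ i ∈ Finset.univ.filter (fun i => ε i = false), a i) + 2 * b j)) (by simp [tup_eq])
    simp only [Fintype.sum_bool, tup_eq]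
    simp only [sgn, if_true, one_mul, Bool.false_eq_true, if_false, neg_mul] at hL ⊢
    rw [sub_add_eq_add_sub] at hL ⊢
    exact pair_sum_three _ h4 h5 h6 _ _ _ _ hL
  rw [Finset.sum_congr rfl fun ε _ => hpair ε, sum_bool_three]
  simp only [Finset.sum_filter, Fin.sum_univ_three, sgn, Matrix.cons_val, if_true,
    Bool.false_eq_true, Bool.true_eq_false, if_false, one_mul, neg_mul, add_zero, zero_add,
    sub_zero]
  rw [← mul_div_mul_left (fibreTwo _ _ _ _ _ _ _) _ ha, ← eps_sum]
  ring

/-- Lagrange interpolation: a polynomial of degree at most 4 on four nodes. -/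
lemma lagrange_quartic (x y z w p0 p1 p2 p3 p4 : ℝ) (q : ℝ → ℝ)
    (hq : ∀ t, q t = p0 + p1 * t + p2 * t ^ 2 + p3 * t ^ 3 + p4 * t ^ 4)
    (hxy : y - x ≠ 0) (hxz : z - x ≠ 0) (hxw : w - x ≠ 0) (hyz : z - y ≠ 0) (hyw : w - y ≠ 0)
    (hzw : w - z ≠ 0) :
    q x / ((y - x) * (z - x) * (w - x)) + q y / ((x - y) * (z - y) * (w - y))
      + q z / ((x - z) * (y - z) * (w - z)) + q w / ((x - w) * (y - w) * (z - w)) =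
      -(p3 + p4 * (x + y + z + w)) := by
  rw [← neg_sub y x, ← neg_sub z x, ← neg_sub w x, ← neg_sub z y, ← neg_sub w y, ← neg_sub w z]
  simp only [hq]
  field_simp
  ring

/-- Along the fibre over the `j`-th fixed point, `fibreTwo` is a quartic in `t = bⱼ`; `B1, B2, B3`
are elementary symmetric functions of all four `bₖ`, and the expressions in the last three
arguments are those of the differences `bₖ - t`. -/
def quartic (g1 g2 g3 c B1 B2 B3 t : ℝ) : ℝ :=
  fibreTwo g1 g2 g3 (c + 2 * t) (B1 - 4 * t) (B2 - 3 * t * B1 + 6 * t ^ 2)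
    (B3 - 2 * t * B2 + 3 * t ^ 2 * B1 - 4 * t ^ 3)

/-- Only the two leading coefficients of `quartic` are needed; the lower ones are recovered by
interpolation at `0, 1, -1`. -/
lemma fibreTwo_quartic (g1 g2 g3 c B1 B2 B3 : ℝ) :
    ∃ p0 p1 p2 : ℝ, ∀ t, quartic g1 g2 g3 c B1 B2 B3 t = p0 + p1 * t + p2 * t ^ 2
      + (-82176 * g1 + 164352 * c - 909856 * B1) * t ^ 3 + 992032 * t ^ 4 := by
  let p3 : ℝ := -82176 * g1 + 164352 * c - 909856 * B1
  let r : ℝ → ℝ := fun t => quartic g1 g2 g3 c B1 B2 B3 t - p3 * t ^ 3 - 992032 * t ^ 4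
  refine ⟨r 0, (r 1 - r (-1)) / 2, (r 1 + r (-1)) / 2 - r 0, fun t => ?_⟩
  simp only [r, p3, quartic, fibreTwo]
  ring

lemma bDiffs_eq (b : Fin 4 → ℝ) :
    bDiffs b 0 = (b 1 - b 0) ::ₘ (b 2 - b 0) ::ₘ (b 3 - b 0) ::ₘ 0 ∧
    bDiffs b 1 = (b 0 - b 1) ::ₘ (b 2 - b 1) ::ₘ (b 3 - b 1) ::ₘ 0 ∧
    bDiffs b 2 = (b 0 - b 2) ::ₘ (b 1 - b 2) ::ₘ (b 3 - b 2) ::ₘ 0 ∧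
    bDiffs b 3 = (b 0 - b 3) ::ₘ (b 1 - b 3) ::ₘ (b 2 - b 3) ::ₘ 0 :=
  ⟨rfl, rfl, rfl, rfl⟩

/-- The sum over `ε` and `δ` in terms of `quartic`, where `y, z, w` are the `bₖ` with `k ≠ j`. -/
lemma eps_delta_sum_quartic (a : Fin 3 → ℝ) (b : Fin 4 → ℝ) (c : ℝ) (j : Fin 4)
    (hgen : ∀ (ε : Fin 3 → Bool) (j : Fin 4) (δ : Bool), ∀ x ∈ tup a b c ε j δ, x ≠ 0)
    (y z w : ℝ) (hd : bDiffs b j = (y - b j) ::ₘ (z - b j) ::ₘ (w - b j) ::ₘ 0)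
    (B1 B2 B3 : ℝ) (hB1 : B1 = b j + y + z + w)
    (hB2 : B2 = b j * y + b j * z + b j * w + y * z + y * w + z * w)
    (hB3 : B3 = b j * y * z + b j * y * w + b j * z * w + y * z * w) :
    ∑ ε : Fin 3 → Bool, ∑ δ : Bool, contrib (tup a b c ε j δ) =
      quartic (a 0 + a 1 + a 2) (a 0 * a 1 + a 1 * a 2 + a 2 * a 0) (a 0 * a 1 * a 2) c B1 B2 B3
        (b j) / ((y - b j) * (z - b j) * (w - b j)) := by
  have he : ∀ k, esym (k + 4) (bDiffs b j) = 0 := by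
    intro k
    rw [hd, esym, Multiset.powersetCard_eq_empty _ (by simp)]
    simp
  rw [eps_delta_sum a b c j hgen (he 0) (he 1) (he 2), quartic, hd]
  simp only [Multiset.prod_cons, Multiset.prod_zero, mul_one, esym_succ_cons 0, esym_succ_cons 1,
    esym_succ_cons 2, esym_zero, esym_succ_empty 0, esym_succ_empty 1, esym_succ_empty 2,
    zero_add, Nat.reduceAdd]
  subst hB1 hB2 hB3
  congr 1
  · congr 1 <;> ring
  · ring

theorem futaki_Td6 (a : Fin 3 → ℝ) (b : Fin 4 → ℝ) (c : ℝ)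
    (hb4 : b 3 = 0)
    (hgen : ∀ (ε : Fin 3 → Bool) (j : Fin 4) (δ : Bool),
      ∀ x ∈ tup a b c ε j δ, x ≠ 0) :
    ∑ ε : Fin 3 → Bool, ∑ j : Fin 4, ∑ δ : Bool,
      (let E : ℕ → ℝ := fun k => esym k (tup a b c ε j δ);
       ((2 * E 1 ^ 6 - 12 * E 1 ^ 4 * E 2 + 11 * E 1 ^ 2 * E 2 ^ 2 + 5 * E 1 ^ 3 * E 3 + 11 * E 1 * E 2 * E 3 + 9 * E 3 ^ 2 - 5 * E 1 ^ 2 * E 4 - 9 * E 2 * E 4 - 2 * E 1 * E 5 + 2 * E 6) * E 1 ^ 2) / (tup a b c ε j δ).prod)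
    = 82176 * (a 0 + a 1 + a 2 - b 0 - b 1 - b 2 - 2 * c) := by
  change ∑ ε : Fin 3 → Bool, ∑ j : Fin 4, ∑ δ : Bool, contrib (tup a b c ε j δ) = _
  have hmem : ∀ j, ∀ x ∈ bDiffs b j, x ≠ 0 := fun j x hx =>
    hgen (fun _ => true) j true x (by simp [tup_eq, hx])
  obtain ⟨h0, h1, h2, h3⟩ := bDiffs_eq b
  obtain ⟨p0, p1, p2, hp⟩ := fibreTwo_quartic (a 0 + a 1 + a 2)
    (a 0 * a 1 + a 1 * a 2 + a 2 * a 0) (a 0 * a 1 * a 2) c (b 0 + b 1 + b 2 + b 3)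
    (b 0 * b 1 + b 0 * b 2 + b 0 * b 3 + b 1 * b 2 + b 1 * b 3 + b 2 * b 3)
    (b 0 * b 1 * b 2 + b 0 * b 1 * b 3 + b 0 * b 2 * b 3 + b 1 * b 2 * b 3)
  rw [Finset.sum_comm, Fin.sum_univ_four,
    eps_delta_sum_quartic a b c 0 hgen _ _ _ h0 _ _ _ rfl rfl rfl,
    eps_delta_sum_quartic a b c 1 hgen _ _ _ h1 (b 0 + b 1 + b 2 + b 3) _ _ (by ring)
      (by ring : b 0 * b 1 + b 0 * b 2 + b 0 * b 3 + b 1 * b 2 + b 1 * b 3 + b 2 * b 3 = _)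
      (by ring : b 0 * b 1 * b 2 + b 0 * b 1 * b 3 + b 0 * b 2 * b 3 + b 1 * b 2 * b 3 = _),
    eps_delta_sum_quartic a b c 2 hgen _ _ _ h2 (b 0 + b 1 + b 2 + b 3) _ _ (by ring)
      (by ring : b 0 * b 1 + b 0 * b 2 + b 0 * b 3 + b 1 * b 2 + b 1 * b 3 + b 2 * b 3 = _)
      (by ring : b 0 * b 1 * b 2 + b 0 * b 1 * b 3 + b 0 * b 2 * b 3 + b 1 * b 2 * b 3 = _),
    eps_delta_sum_quartic a b c 3 hgen _ _ _ h3 (b 0 + b 1 + b 2 + b 3) _ _ (by ring)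
      (by ring : b 0 * b 1 + b 0 * b 2 + b 0 * b 3 + b 1 * b 2 + b 1 * b 3 + b 2 * b 3 = _)
      (by ring : b 0 * b 1 * b 2 + b 0 * b 1 * b 3 + b 0 * b 2 * b 3 + b 1 * b 2 * b 3 = _),
    lagrange_quartic _ _ _ _ _ _ _ _ _ _ hp (hmem 0 _ (by simp [h0])) (hmem 0 _ (by simp [h0]))
      (hmem 0 _ (by simp [h0])) (hmem 1 _ (by simp [h1])) (hmem 1 _ (by simp [h1]))
      (hmem 2 _ (by simp [h2])), hb4]
  ring
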